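/- arXiv:1106.3102 — 5 statements merged into one kernel-verified Lean document; each statement's English description precedes it below -/
import Mathlib

section
/- Let λ_j > λ_k > 0. Then Σ_{a=0}^∞ f_{λ_j}(a) · f_{λ_k}(a+1) < Σ_{a=0}^∞ f_{λ_k}(a) · f_{λ_j}(a+1). Equivalently, in the two-group winner-take-all setting with independent Poisson vote totals A_j (mean λ_j) and A_k (mean λ_k), the prize pivot of the group with the larger expected vote total is strictly smaller than that of the group with the smaller expected vote total. (Lemma 4, second claim.) -/
/-- The Poisson probability mass function with mean `l`: `f_l(a) = l^a e^{-l} / a!`. -/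
noncomputable def poissonPMF (l : ℝ) (a : ℕ) : ℝ := l ^ a * Real.exp (-l) / (Nat.factorial a)

theorem summable_poisson_aux (x y : ℝ) (hx : 0 < x) (hy : 0 < y) :
    Summable (fun a : ℕ => poissonPMF x a * poissonPMF y (a + 1)) := by
  have h := (Real.summable_pow_div_factorial (x * y)).mul_left (y * Real.exp (-x) * Real.exp (-y))
  refine Summable.of_nonneg_of_le (fun a => ?_) (fun a => ?_) h
  · unfold poissonPMF; positivity
  · have h1 : (1 : ℝ) ≤ ((a + 1).factorial : ℝ) := by
      exact_mod_cast Nat.succ_le_of_lt (Nat.factorial_pos (a + 1))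
    have e : poissonPMF x a * poissonPMF y (a + 1)
        = (y * Real.exp (-x) * Real.exp (-y) * ((x * y) ^ a / (a.factorial : ℝ)))
          / ((a + 1).factorial : ℝ) := by
      unfold poissonPMF
      rw [mul_pow, pow_succ]
      ring
    rw [e]
    exact div_le_self (by positivity) h1

theorem poisson_term_lt (lj lk : ℝ) (hk : 0 < lk) (hjk : lk < lj) (a : ℕ) :
    poissonPMF lj a * poissonPMF lk (a + 1) < poissonPMF lk a * poissonPMF lj (a + 1) := by
  have hj : 0 < lj := hk.trans hjk
  have e : ∀ x y : ℝ, poissonPMF x a * poissonPMF y (a + 1)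
      = y * ((x * y) ^ a * (Real.exp (-x) * Real.exp (-y))
        / ((a.factorial : ℝ) * ((a + 1).factorial : ℝ))) := by
    intro x y
    unfold poissonPMF
    rw [mul_pow, pow_succ]
    ring
  rw [e, e, mul_comm lk lj, mul_comm (Real.exp (-lk))]
  exact mul_lt_mul_of_pos_right hjk (by positivity)

/-- **Lemma 4, second claim.** If `λ_j > λ_k > 0`, then
`Σ_{a=0}^∞ f_{λ_j}(a) f_{λ_k}(a+1) < Σ_{a=0}^∞ f_{λ_k}(a) f_{λ_j}(a+1)`: in the two-group
winner-take-all setting, the prize pivot of the group with the larger expected vote total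
is strictly smaller than that of the group with the smaller expected vote total. -/
theorem two_group_pivot_lt (lj lk : ℝ) (hk : 0 < lk) (hjk : lk < lj) :
    (∑' a : ℕ, poissonPMF lj a * poissonPMF lk (a + 1))
      < ∑' a : ℕ, poissonPMF lk a * poissonPMF lj (a + 1) := by
  have hj : 0 < lj := hk.trans hjk
  exact Summable.tsum_lt_tsum (i := 0) (fun a => (poisson_term_lt lj lk hk hjk a).le)
    (poisson_term_lt lj lk hk hjk 0) (summable_poisson_aux lj lk hj hk)
    (summable_poisson_aux lk lj hk hj)
end

section
/- Fix p > 0 and q > 0. For n > 0 let A_n and B_n be independent ℕ-valued random variables, Poisson-distributed with means np and nq respectively. Then as n → ∞, Pr(A_n = B_n) ∼ e^{−n(√p − √q)²} / (2 (pq)^{1/4} √(πn)); that is, Pr(A_n = B_n) · 2 (pq)^{1/4} √(πn) · e^{n(√p − √q)²} → 1. (Exact-tie asymptotic underlying Proposition 5 (pro_OP).) -/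
open MeasureTheory Filter Topology in
lemma tie_gauss_limit :
    Tendsto (fun t : ℝ => Real.sqrt t * ∫ u in (-(Real.pi / 2))..(Real.pi / 2),
      Real.exp (-(2 * t * (1 - Real.cos u)))) atTop (𝓝 (Real.sqrt Real.pi)) := by
  have hpi := Real.pi_pos
  have key : Tendsto (fun t : ℝ => ∫ s : ℝ, (Set.Ioc (-(Real.pi / 2)) (Real.pi / 2)).indicator
      (fun u => Real.exp (-(2 * t * (1 - Real.cos u)))) (s / Real.sqrt t)) atTop
      (𝓝 (∫ s : ℝ, Real.exp (-1 * s ^ 2))) := by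
    apply tendsto_integral_filter_of_dominated_convergence
      (fun s : ℝ => Real.exp (-(4 / Real.pi ^ 2) * s ^ 2))
    · refine Eventually.of_forall fun t => ?_
      apply Measurable.aestronglyMeasurable
      apply Measurable.comp (g := (Set.Ioc (-(Real.pi / 2)) (Real.pi / 2)).indicator
        (fun u => Real.exp (-(2 * t * (1 - Real.cos u)))))
      · apply Measurable.indicator _ measurableSet_Ioc
        fun_prop
      · fun_prop
    · filter_upwards [eventually_gt_atTop 0] with t ht
      refine Eventually.of_forall fun s => ?_
      by_cases h : s / Real.sqrt t ∈ Set.Ioc (-(Real.pi / 2)) (Real.pi / 2)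
      · rw [Set.indicator_of_mem h, Real.norm_of_nonneg (Real.exp_pos _).le]
        apply Real.exp_le_exp.2
        have h1 := Real.cos_le_one_sub_mul_cos_sq (x := s / Real.sqrt t)
          (by rw [abs_le]; constructor <;> linarith [h.1, h.2])
        have h2 : t * (s / Real.sqrt t) ^ 2 = s ^ 2 := by
          rw [div_pow, Real.sq_sqrt ht.le]; field_simp
        have h3 : 2 * t * (2 / Real.pi ^ 2 * (s / Real.sqrt t) ^ 2)
            ≤ 2 * t * (1 - Real.cos (s / Real.sqrt t)) :=
          mul_le_mul_of_nonneg_left (by linarith) (by positivity)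
        have h4 : 2 * t * (2 / Real.pi ^ 2 * (s / Real.sqrt t) ^ 2) = 4 / Real.pi ^ 2 * s ^ 2 := by
          rw [← h2]; ring
        linarith
      · rw [Set.indicator_of_notMem h, norm_zero]
        exact (Real.exp_pos _).le
    · exact integrable_exp_neg_mul_sq (by positivity)
    · refine Eventually.of_forall fun s => ?_
      have hs : Tendsto (fun t : ℝ => s / Real.sqrt t) atTop (𝓝 0) :=
        tendsto_const_nhds.div_atTop Real.tendsto_sqrt_atTop
      have hE : ∀ᶠ t : ℝ in atTop, s / Real.sqrt t ∈ Set.Ioc (-(Real.pi / 2)) (Real.pi / 2) :=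
        hs.eventually (Ioc_mem_nhds (by linarith) (by linarith))
      have hE2 : ∀ᶠ t : ℝ in atTop, s / Real.sqrt t ∈ Set.Ioc (-1 : ℝ) 1 :=
        hs.eventually (Ioc_mem_nhds (by norm_num) (by norm_num))
      have hlim : Tendsto (fun t : ℝ => 2 * t * (1 - Real.cos (s / Real.sqrt t))) atTop
          (𝓝 (s ^ 2)) := by
        rw [tendsto_iff_norm_sub_tendsto_zero]
        have h0 : Tendsto (fun t : ℝ => s ^ 4 * (10 / 96) / t) atTop (𝓝 0) :=
          tendsto_const_nhds.div_atTop tendsto_id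
        refine squeeze_zero' (Eventually.of_forall fun t => norm_nonneg _) ?_ h0
        filter_upwards [hE2, eventually_gt_atTop 0] with t h1 ht
        have hb := Real.cos_bound (x := s / Real.sqrt t)
          (by rw [abs_le]; constructor <;> linarith [h1.1, h1.2])
        have h2 : t * (s / Real.sqrt t) ^ 2 = s ^ 2 := by
          rw [div_pow, Real.sq_sqrt ht.le]; field_simp
        have h4 : |s / Real.sqrt t| ^ 4 = s ^ 4 / t ^ 2 := by
          rw [show |s / Real.sqrt t| ^ 4 = (|s / Real.sqrt t| ^ 2) ^ 2 by ring, sq_abs, div_pow,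
            Real.sq_sqrt ht.le]; ring
        rw [h4] at hb
        have h5 : 2 * t * (1 - Real.cos (s / Real.sqrt t)) - s ^ 2
            = -(2 * t) * (Real.cos (s / Real.sqrt t) - (1 - (s / Real.sqrt t) ^ 2 / 2)) := by
          rw [← h2]; ring
        rw [h5, norm_mul, norm_neg, Real.norm_of_nonneg (by positivity), Real.norm_eq_abs]
        calc _ ≤ 2 * t * (s ^ 4 / t ^ 2 * (5 / 96)) :=
              mul_le_mul_of_nonneg_left hb (by positivity)
          _ = _ := by field_simp; ring
      have := (Real.continuous_exp.tendsto _).comp hlim.neg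
      rw [show -1 * s ^ 2 = - s ^ 2 by ring]
      refine this.congr' ?_
      filter_upwards [hE] with t h
      rw [Set.indicator_of_mem h]; rfl
  rw [integral_gaussian, div_one] at key
  refine key.congr fun t => ?_
  rw [Measure.integral_comp_div (g := (Set.Ioc (-(Real.pi / 2)) (Real.pi / 2)).indicator
      (fun u => Real.exp (-(2 * t * (1 - Real.cos u))))), integral_indicator measurableSet_Ioc,
      intervalIntegral.integral_of_le (by linarith), abs_of_nonneg (Real.sqrt_nonneg _), smul_eq_mul]

lemma tie_coeff (k : ℕ) : (4 : ℝ) ^ k / ((2 * k).factorial : ℝ) *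
    ∏ i ∈ Finset.range k, ((2 * i + 1 : ℝ) / (2 * i + 2)) = 1 / (k.factorial : ℝ) ^ 2 := by
  induction k with
  | zero => simp
  | succ k ih =>
    rw [Finset.prod_range_succ, show 2 * (k + 1) = 2 * k + 1 + 1 by ring, Nat.factorial_succ,
      Nat.factorial_succ, Nat.factorial_succ]
    push_cast
    have h1 : ((2 * k).factorial : ℝ) ≠ 0 := by positivity
    have h2 : (k.factorial : ℝ) ≠ 0 := by positivity
    have h3 : (2 * k + 1 : ℝ) ≠ 0 := by positivity
    have h4 : (k + 1 : ℝ) ≠ 0 := by positivity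
    calc _ = ((4 : ℝ) ^ k / ((2 * k).factorial : ℝ) *
          ∏ i ∈ Finset.range k, ((2 * i + 1 : ℝ) / (2 * i + 2))) * (1 / (k + 1) ^ 2) := by
          rw [show (2 * k + 1 + 1 : ℝ) = 2 * (k + 1) by ring,
            show (2 * k + 2 : ℝ) = 2 * (k + 1) by ring]
          field_simp
          ring
      _ = _ := by rw [ih]; field_simp

lemma tie_bessel (t : ℝ) (ht : 0 ≤ t) : HasSum (fun a : ℕ => Real.pi * (t ^ (2 * a) / (a.factorial : ℝ) ^ 2))
    (∫ u in (-(Real.pi / 2))..(Real.pi / 2), Real.cosh (2 * t * Real.cos u)) := by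
  have e : ∫ u in (-(Real.pi / 2))..(Real.pi / 2), Real.cosh (2 * t * Real.cos u)
      = ∫ u in (0 : ℝ)..Real.pi, Real.cosh (2 * t * Real.sin u) := by
    have := intervalIntegral.integral_comp_sub_right (a := 0) (b := Real.pi)
      (fun u => Real.cosh (2 * t * Real.cos u)) (Real.pi / 2)
    simp only [Real.cos_sub_pi_div_two] at this
    rw [this]
    congr 1 <;> ring
  rw [e]
  have hterm : ∀ a : ℕ, Real.pi * (t ^ (2 * a) / (a.factorial : ℝ) ^ 2)
      = ∫ u in (0 : ℝ)..Real.pi, (2 * t * Real.sin u) ^ (2 * a) / ((2 * a).factorial : ℝ) := by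
    intro a
    simp only [mul_pow, intervalIntegral.integral_div, intervalIntegral.integral_const_mul]
    rw [integral_sin_pow_even, div_eq_mul_one_div (t ^ (2 * a)), ← tie_coeff a, pow_mul 2 2 a]
    norm_num
    ring
  simp only [hterm]
  apply intervalIntegral.hasSum_integral_of_dominated_convergence
    (fun a _ => (2 * t) ^ (2 * a) / ((2 * a).factorial : ℝ))
  · intro a
    exact Continuous.aestronglyMeasurable (by fun_prop)
  · intro a
    refine Filter.Eventually.of_forall fun u _ => ?_
    rw [norm_div, norm_pow, norm_mul, Real.norm_of_nonneg (by positivity : 0 ≤ 2 * t),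
      Real.norm_of_nonneg (by positivity : (0 : ℝ) ≤ ((2 * a).factorial : ℝ))]
    refine div_le_div_of_nonneg_right (pow_le_pow_left₀ (by positivity) ?_ _) (by positivity)
    exact mul_le_of_le_one_right (by positivity) (Real.abs_sin_le_one u)
  · exact Filter.Eventually.of_forall fun u _ => (Real.hasSum_cosh _).summable
  · simp
  · exact Filter.Eventually.of_forall fun u _ => Real.hasSum_cosh _

open Filter Topology in
lemma tie_bessel_limit : Tendsto (fun t : ℝ => (∑' a : ℕ, t ^ (2 * a) / (a.factorial : ℝ) ^ 2) *
    (2 * Real.sqrt (Real.pi * t)) * Real.exp (-(2 * t))) atTop (𝓝 1) := by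
  have hpi := Real.pi_pos
  have hsp : 0 < Real.sqrt Real.pi := Real.sqrt_pos.2 hpi
  have hss := Real.mul_self_sqrt hpi.le
  have hsmall : Tendsto (fun t : ℝ => Real.sqrt t * (Real.exp (-(2 * t)) * Real.pi)) atTop (𝓝 0) := by
    have h0 : Tendsto (fun t : ℝ => Real.pi * (t ^ (1 / 2 : ℝ) * Real.exp (-2 * t))) atTop
        (𝓝 (Real.pi * 0)) :=
      (tendsto_rpow_mul_exp_neg_mul_atTop_nhds_zero (1 / 2) 2 (by norm_num)).const_mul _
    rw [mul_zero] at h0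
    refine h0.congr fun t => ?_
    rw [Real.sqrt_eq_rpow, neg_mul]; ring
  have hR : Tendsto (fun t : ℝ => Real.sqrt t * ∫ u in (-(Real.pi / 2))..(Real.pi / 2),
      Real.exp (-(2 * t)) * Real.exp (-(2 * t * Real.cos u))) atTop (𝓝 0) := by
    refine squeeze_zero' ?_ ?_ hsmall
    · refine Eventually.of_forall fun t => mul_nonneg (Real.sqrt_nonneg _) ?_
      exact intervalIntegral.integral_nonneg (by linarith) fun u _ => by positivity
    · filter_upwards [eventually_ge_atTop 0] with t ht
      refine mul_le_mul_of_nonneg_left ?_ (Real.sqrt_nonneg _)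
      have : ∫ u in (-(Real.pi / 2))..(Real.pi / 2), Real.exp (-(2 * t))
          = Real.exp (-(2 * t)) * Real.pi := by
        rw [intervalIntegral.integral_const, smul_eq_mul]; ring
      rw [← this]
      apply intervalIntegral.integral_mono_on (by linarith)
        (Continuous.intervalIntegrable (by fun_prop) _ _)
        (Continuous.intervalIntegrable (by fun_prop) _ _)
      intro u hu
      have hc := Real.cos_nonneg_of_mem_Icc hu
      refine mul_le_of_le_one_right (Real.exp_pos _).le ?_
      rw [Real.exp_le_one_iff]
      have : 0 ≤ 2 * t * Real.cos u := by positivity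
      linarith
  have hT := (tie_gauss_limit.add hR).div_const (Real.sqrt Real.pi)
  rw [add_zero, div_self hsp.ne'] at hT
  refine hT.congr' ?_
  filter_upwards [eventually_ge_atTop 0] with t ht
  have hs := (tie_bessel t ht).tsum_eq
  rw [tsum_mul_left] at hs
  have hS : (∑' a : ℕ, t ^ (2 * a) / (a.factorial : ℝ) ^ 2)
      = (∫ u in (-(Real.pi / 2))..(Real.pi / 2), Real.cosh (2 * t * Real.cos u)) / Real.pi := by
    rw [← hs]; field_simp
  have hI : (∫ u in (-(Real.pi / 2))..(Real.pi / 2), Real.cosh (2 * t * Real.cos u))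
      * (2 * Real.exp (-(2 * t))) =
      (∫ u in (-(Real.pi / 2))..(Real.pi / 2), Real.exp (-(2 * t * (1 - Real.cos u))))
      + ∫ u in (-(Real.pi / 2))..(Real.pi / 2),
      Real.exp (-(2 * t)) * Real.exp (-(2 * t * Real.cos u)) := by
    rw [← intervalIntegral.integral_mul_const, ← intervalIntegral.integral_add
        (Continuous.intervalIntegrable (by fun_prop) _ _)
        (Continuous.intervalIntegrable (by fun_prop) _ _)]
    congr 1
    funext u
    rw [Real.cosh_eq, show -(2 * t * (1 - Real.cos u)) = 2 * t * Real.cos u + -(2 * t) by ring,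
      Real.exp_add]
    ring
  rw [← mul_add, ← hI, hS, Real.sqrt_mul hpi.le]
  rw [div_mul_eq_mul_div, div_mul_eq_mul_div, div_eq_div_iff hsp.ne' hpi.ne']
  generalize (∫ u in (-(Real.pi / 2))..(Real.pi / 2), Real.cosh (2 * t * Real.cos u)) = I
  linear_combination (-(I * 2 * Real.sqrt t * Real.exp (-(2 * t)))) * hss


/-- **Exact-tie asymptotic underlying Proposition 5.** Fix `p, q > 0` and let `A_n`, `B_n` be
independent Poisson with means `np` and `nq`. Then as `n → ∞`,
`Pr(A_n = B_n) ∼ e^{-n(√p-√q)²} / (2 (pq)^{1/4} √(πn))`, i.e.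
`Pr(A_n = B_n) · 2 (pq)^{1/4} √(πn) · e^{n(√p-√q)²} → 1`, where
`Pr(A_n = B_n) = Σ_{a=0}^∞ f_{np}(a) f_{nq}(a)`. -/
theorem tie_probability_asymptotic (p q : ℝ) (hp : 0 < p) (hq : 0 < q) :
    Filter.Tendsto
      (fun n : ℝ =>
        (∑' a : ℕ, poissonPMF (n * p) a * poissonPMF (n * q) a)
          * (2 * (p * q) ^ ((1 : ℝ) / 4) * Real.sqrt (Real.pi * n))
          * Real.exp (n * (Real.sqrt p - Real.sqrt q) ^ 2))
      Filter.atTop (nhds 1) := by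

  have hpq : 0 < p * q := mul_pos hp hq
  have hlim : Filter.Tendsto (fun n : ℝ => n * Real.sqrt (p * q)) Filter.atTop Filter.atTop :=
    Filter.tendsto_id.atTop_mul_const (Real.sqrt_pos.2 hpq)
  refine (tie_bessel_limit.comp hlim).congr' ?_
  filter_upwards [Filter.eventually_ge_atTop 0] with n hn
  have hterm : ∀ a : ℕ, poissonPMF (n * p) a * poissonPMF (n * q) a
      = Real.exp (-(n * p) + -(n * q)) *
        ((n * Real.sqrt (p * q)) ^ (2 * a) / (a.factorial : ℝ) ^ 2) := by
    intro a
    unfold poissonPMF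
    have h0 : (n * Real.sqrt (p * q)) ^ 2 = (n * p) * (n * q) := by
      rw [mul_pow, Real.sq_sqrt hpq.le]; ring
    rw [Real.exp_add, pow_mul, h0, mul_pow (n * p)]
    ring
  simp only [hterm, Function.comp]
  rw [tsum_mul_left]
  have h1 : Real.sqrt (Real.pi * (n * Real.sqrt (p * q)))
      = (p * q) ^ ((1 : ℝ) / 4) * Real.sqrt (Real.pi * n) := by
    rw [← mul_assoc, Real.sqrt_mul (by positivity), mul_comm]
    congr 1
    rw [Real.sqrt_eq_rpow, Real.sqrt_eq_rpow, ← Real.rpow_mul hpq.le]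
    norm_num
  have h2 : Real.exp (-(2 * (n * Real.sqrt (p * q)))) = Real.exp (-(n * p) + -(n * q)) *
      Real.exp (n * (Real.sqrt p - Real.sqrt q) ^ 2) := by
    rw [← Real.exp_add, sub_sq, Real.sq_sqrt hp.le, Real.sq_sqrt hq.le, Real.sqrt_mul hp.le]
    congr 1
    ring
  rw [h1, h2]
  ring
end

section
/- Fix p > 0 and q > 0. For n > 0 let A_n and B_n be independent ℕ-valued random variables, Poisson-distributed with means np and nq respectively. Then as n → ∞, Pr(A_n = B_n − 1) ∼ (q/p)^{1/2} · e^{−n(√p − √q)²} / (2 (pq)^{1/4} √(πn)). (Near-tie asymptotic underlying Proposition 5 (pro_OP).) -/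
open Filter Topology MeasureTheory

lemma wallis_term (a : ℕ) :
    (∫ t in (0:ℝ)..Real.pi, Real.sin t ^ (2 * (a + 1)))
      = Real.pi * ((Nat.factorial (2 * a + 1) : ℝ) /
          (2 ^ (2 * a + 1) * (Nat.factorial a) * (Nat.factorial (a + 1)))) := by
  rw [integral_sin_pow_even]
  congr 1
  induction a with
  | zero => norm_num
  | succ k ih =>
    rw [Finset.prod_range_succ, ih]
    have h1 : Nat.factorial (2 * (k + 1) + 1)
      = (2 * k + 3) * ((2 * k + 2) * Nat.factorial (2 * k + 1)) := by
      rw [show 2 * (k + 1) + 1 = (2 * k + 1) + 1 + 1 by ring, Nat.factorial_succ,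
        Nat.factorial_succ]
    have h2 : Nat.factorial (k + 1 + 1) = (k + 2) * Nat.factorial (k + 1) := by
      rw [Nat.factorial_succ]
    have h3 : Nat.factorial (k + 1) = (k + 1) * Nat.factorial k := by
      rw [Nat.factorial_succ]
    rw [h1, h2, h3]
    have : (Nat.factorial k : ℝ) ≠ 0 := by exact_mod_cast Nat.factorial_ne_zero k
    have : ((k : ℝ) + 1) ≠ 0 := by positivity
    have : ((k : ℝ) + 2) ≠ 0 := by positivity
    push_cast
    field_simp
    ring

lemma bessel_hasSum (z : ℝ) :
    HasSum (fun a : ℕ => z ^ (2 * a + 1) / ((Nat.factorial a : ℝ) * Nat.factorial (a + 1)))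
      ((1 / Real.pi) * ∫ t in (0:ℝ)..Real.pi, Real.sinh (2 * z * Real.sin t) * Real.sin t) := by
  have key : HasSum (fun a : ℕ => ∫ t in (0:ℝ)..Real.pi,
      ((2 * z * Real.sin t) ^ (2 * a + 1) / (Nat.factorial (2 * a + 1) : ℝ)) * Real.sin t)
      (∫ t in (0:ℝ)..Real.pi, Real.sinh (2 * z * Real.sin t) * Real.sin t) := by
    apply intervalIntegral.hasSum_integral_of_dominated_convergence
      (bound := fun a _ => |2 * z| ^ (2 * a + 1) / (Nat.factorial (2 * a + 1) : ℝ))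
    · intro a
      apply Continuous.aestronglyMeasurable
      fun_prop
    · intro a
      refine Eventually.of_forall fun t _ => ?_
      rw [norm_mul, norm_div, norm_pow, Real.norm_eq_abs, Real.norm_eq_abs, Real.norm_eq_abs,
        Nat.abs_cast, abs_mul (2 * z)]
      have hs := Real.abs_sin_le_one t
      have h0 := abs_nonneg (Real.sin t)
      calc _ ≤ (|2 * z| * 1) ^ (2 * a + 1) / (Nat.factorial (2 * a + 1) : ℝ) * 1 := by gcongr
        _ = _ := by ring
    · refine Eventually.of_forall fun t _ => ?_
      exact (Real.hasSum_sinh _).summable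
    · simp
    · refine Eventually.of_forall fun t _ => ?_
      exact (Real.hasSum_sinh _).mul_right _
  have := key.mul_left (1 / Real.pi)
  refine (congrArg (fun f : ℕ → ℝ => HasSum f _) (funext fun a => ?_)).mpr this
  have e : ∀ t : ℝ, ((2 * z * Real.sin t) ^ (2 * a + 1) / (Nat.factorial (2 * a + 1) : ℝ))
      * Real.sin t = ((2 * z) ^ (2 * a + 1) / (Nat.factorial (2 * a + 1) : ℝ)) *
        Real.sin t ^ (2 * (a + 1)) := by
    intro t; rw [mul_pow]; ring
  simp_rw [e]
  rw [intervalIntegral.integral_const_mul, wallis_term, mul_pow]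
  have := Real.pi_ne_zero
  have : (Nat.factorial a : ℝ) ≠ 0 := by exact_mod_cast Nat.factorial_ne_zero _
  have : (Nat.factorial (a + 1) : ℝ) ≠ 0 := by exact_mod_cast Nat.factorial_ne_zero _
  have : (Nat.factorial (2 * a + 1) : ℝ) ≠ 0 := by exact_mod_cast Nat.factorial_ne_zero _
  field_simp

lemma shift_int (x : ℝ) :
    (∫ t in (0:ℝ)..Real.pi, Real.sinh (x * Real.sin t) * Real.sin t)
      = ∫ t in (-(Real.pi / 2))..(Real.pi / 2), Real.sinh (x * Real.cos t) * Real.cos t := by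
  have := intervalIntegral.integral_comp_add_right (a := -(Real.pi / 2)) (b := Real.pi / 2)
    (fun t => Real.sinh (x * Real.sin t) * Real.sin t) (Real.pi / 2)
  simp only [Real.sin_add_pi_div_two] at this
  rw [this]
  congr 1 <;> ring

lemma lim_inner (u : ℝ) :
    Tendsto (fun s : ℝ => s ^ 2 * (1 - Real.cos (u / s))) atTop (𝓝 (u ^ 2 / 2)) := by
  have h1 : Tendsto (fun s : ℝ => u ^ 2 / 2 * Real.sinc (u / 2 / s) ^ 2) atTop
      (𝓝 (u ^ 2 / 2 * Real.sinc 0 ^ 2)) := by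
    have : Tendsto (fun s : ℝ => u / 2 / s) atTop (𝓝 0) := tendsto_const_nhds.div_atTop tendsto_id
    exact (((Real.continuous_sinc.tendsto 0).comp this).pow 2).const_mul _
  simp only [Real.sinc_zero, one_pow, mul_one] at h1
  refine h1.congr' ?_
  filter_upwards [eventually_gt_atTop 0] with s hs
  have h2 : Real.cos (u / s) = 1 - 2 * Real.sin (u / 2 / s) ^ 2 := by
    have : u / s = 2 * (u / 2 / s) := by field_simp
    rw [this, Real.cos_two_mul, Real.cos_sq']; ring
  rw [h2]
  by_cases hu : u = 0
  · simp [hu]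
  · rw [Real.sinc_of_ne_zero (by positivity)]
    field_simp
    ring

lemma lim_integral :
    Tendsto (fun s : ℝ => s * Real.exp (-s ^ 2) *
      ∫ t in (-(Real.pi / 2))..(Real.pi / 2), Real.sinh (s ^ 2 * Real.cos t) * Real.cos t)
      atTop (𝓝 (√(2 * Real.pi) / 2)) := by
  have hpi := Real.pi_pos
  set F : ℝ → ℝ → ℝ := fun s u =>
    (Set.Ioc (s * -(Real.pi / 2)) (s * (Real.pi / 2))).indicator
      (fun u => Real.exp (-s ^ 2) * Real.sinh (s ^ 2 * Real.cos (u / s)) * Real.cos (u / s)) u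
    with hF
  have hlim : Tendsto (fun s => ∫ u, F s u) atTop (𝓝 (∫ u : ℝ, Real.exp (-(1/2) * u ^ 2) / 2)) := by
    apply tendsto_integral_filter_of_dominated_convergence
      (bound := fun u : ℝ => Real.exp (-(2 / Real.pi ^ 2) * u ^ 2))
    · refine Eventually.of_forall fun s => ?_
      apply Measurable.aestronglyMeasurable
      apply Measurable.indicator _ measurableSet_Ioc
      fun_prop
    · filter_upwards [eventually_gt_atTop 0] with s hs
      refine Eventually.of_forall fun u => ?_
      simp only [hF, Set.indicator_apply]
      split_ifs with hu
      · obtain ⟨h1, h2⟩ := hu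
        have h1' : -(Real.pi / 2) ≤ u / s := by rw [le_div_iff₀ hs]; linarith
        have h2' : u / s ≤ Real.pi / 2 := by rw [div_le_iff₀ hs]; linarith
        have hc : 0 ≤ Real.cos (u / s) := Real.cos_nonneg_of_mem_Icc ⟨h1', h2'⟩
        have hc1 := Real.cos_le_one (u / s)
        have hq : Real.cos (u / s) ≤ 1 - 2 / Real.pi ^ 2 * (u / s) ^ 2 :=
          Real.cos_le_one_sub_mul_cos_sq (abs_le.2 ⟨by linarith, by linarith⟩)
        have hs0 : 0 ≤ Real.sinh (s ^ 2 * Real.cos (u / s)) :=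
          Real.sinh_nonneg_iff.2 (by positivity)
        have hs1 : Real.sinh (s ^ 2 * Real.cos (u / s)) ≤ Real.exp (s ^ 2 * Real.cos (u / s)) := by
          rw [Real.sinh_eq]
          have := Real.exp_pos (s ^ 2 * Real.cos (u / s))
          have := Real.exp_pos (-(s ^ 2 * Real.cos (u / s)))
          linarith
        rw [Real.norm_of_nonneg (by positivity)]
        calc _ ≤ Real.exp (-s ^ 2) * Real.exp (s ^ 2 * Real.cos (u / s)) * 1 := by gcongr
          _ = Real.exp (-s ^ 2 + s ^ 2 * Real.cos (u / s)) := by rw [mul_one, Real.exp_add]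
          _ ≤ _ := by
            apply Real.exp_le_exp.2
            have := mul_le_mul_of_nonneg_left hq (sq_nonneg s)
            have e : s ^ 2 * (1 - 2 / Real.pi ^ 2 * (u / s) ^ 2)
              = s ^ 2 - 2 / Real.pi ^ 2 * u ^ 2 := by field_simp
            linarith
      · simp only [norm_zero]; positivity
    · exact integrable_exp_neg_mul_sq (by positivity)
    · refine Eventually.of_forall fun u => ?_
      have hin : ∀ᶠ s : ℝ in atTop, u ∈ Set.Ioc (s * -(Real.pi / 2)) (s * (Real.pi / 2)) := by
        filter_upwards [eventually_gt_atTop (|u| / (Real.pi / 2))] with s hs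
        rw [div_lt_iff₀ (by positivity)] at hs
        have := abs_lt.1 hs
        constructor <;> linarith
      have hcos : Tendsto (fun s : ℝ => Real.cos (u / s)) atTop (𝓝 1) := by
        have : Tendsto (fun s : ℝ => u / s) atTop (𝓝 0) := tendsto_const_nhds.div_atTop tendsto_id
        simpa [Function.comp_def] using (Real.continuous_cos.tendsto 0).comp this
      have hA : Tendsto (fun s : ℝ => Real.exp (-(s ^ 2 * (1 - Real.cos (u / s))))) atTop
          (𝓝 (Real.exp (-(u ^ 2 / 2)))) :=
        (Real.continuous_exp.tendsto _).comp (lim_inner u).neg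
      have hB : Tendsto (fun s : ℝ => Real.exp (-(s ^ 2 * (1 + Real.cos (u / s))))) atTop
          (𝓝 0) := by
        apply Real.tendsto_exp_neg_atTop_nhds_zero.comp
        apply Tendsto.atTop_mul_pos (C := 1 + 1) (by norm_num) (tendsto_pow_atTop (by norm_num))
        exact hcos.const_add 1
      have hT := ((hA.sub hB).div_const 2).mul hcos
      have e : (Real.exp (-(u ^ 2 / 2)) - 0) / 2 * 1 = Real.exp (-(1/2) * u ^ 2) / 2 := by
        rw [sub_zero, mul_one]; congr 2; ring
      rw [e] at hT
      refine hT.congr' ?_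
      filter_upwards [hin] with s hs
      simp only [hF, Set.indicator_of_mem hs]
      rw [Real.sinh_eq, show -(s ^ 2 * (1 - Real.cos (u / s))) = -s^2 + s^2 * Real.cos (u / s) by ring,
        show -(s ^ 2 * (1 + Real.cos (u / s))) = -s^2 + -(s^2 * Real.cos (u / s)) by ring,
        Real.exp_add, Real.exp_add]
      ring
  have hval : (∫ u : ℝ, Real.exp (-(1/2) * u ^ 2) / 2) = √(2 * Real.pi) / 2 := by
    rw [integral_div, integral_gaussian]
    congr 2; field_simp
  rw [hval] at hlim
  refine hlim.congr' ?_
  filter_upwards [eventually_gt_atTop 0] with s hs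
  simp only [hF]
  rw [integral_indicator measurableSet_Ioc, ← intervalIntegral.integral_of_le (by nlinarith)]
  have := intervalIntegral.integral_comp_div (a := s * -(Real.pi / 2)) (b := s * (Real.pi / 2))
    (fun t => Real.exp (-s ^ 2) * Real.sinh (s ^ 2 * Real.cos t) * Real.cos t) hs.ne'
  rw [this, mul_div_cancel_left₀ _ hs.ne', mul_div_cancel_left₀ _ hs.ne']
  simp only [mul_assoc, smul_eq_mul, intervalIntegral.integral_const_mul]

/-- **Near-tie asymptotic underlying Proposition 5.** Fix `p, q > 0` and let `A_n`, `B_n` be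
independent Poisson with means `np` and `nq`. Then as `n → ∞`,
`Pr(A_n = B_n - 1) ∼ (q/p)^{1/2} e^{-n(√p-√q)²} / (2 (pq)^{1/4} √(πn))`, where
`Pr(A_n = B_n - 1) = Σ_{a=0}^∞ f_{np}(a) f_{nq}(a+1)` and `∼` means the ratio tends to 1. -/
theorem near_tie_probability_asymptotic (p q : ℝ) (hp : 0 < p) (hq : 0 < q) :
    Filter.Tendsto
      (fun n : ℝ =>
        (∑' a : ℕ, poissonPMF (n * p) a * poissonPMF (n * q) (a + 1))
          / ((q / p) ^ ((1 : ℝ) / 2) * Real.exp (-(n * (Real.sqrt p - Real.sqrt q) ^ 2))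
              / (2 * (p * q) ^ ((1 : ℝ) / 4) * Real.sqrt (Real.pi * n))))
      Filter.atTop (nhds 1) := by
  obtain ⟨P, hP, rfl⟩ : ∃ P : ℝ, 0 < P ∧ P ^ 2 = p :=
    ⟨√p, Real.sqrt_pos.2 hp, Real.sq_sqrt hp.le⟩
  obtain ⟨Q, hQ, rfl⟩ : ∃ Q : ℝ, 0 < Q ∧ Q ^ 2 = q :=
    ⟨√q, Real.sqrt_pos.2 hq, Real.sq_sqrt hq.le⟩
  have e1 : (Q ^ 2 / P ^ 2) ^ ((1 : ℝ) / 2) = Q / P := by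
    rw [← Real.sqrt_eq_rpow, ← div_pow, Real.sqrt_sq (by positivity)]
  have e2 : (P ^ 2 * Q ^ 2) ^ ((1 : ℝ) / 4) = √(P * Q) := by
    rw [← mul_pow, ← Real.rpow_natCast, ← Real.rpow_mul (by positivity), Real.sqrt_eq_rpow]
    norm_num
  rw [e1, e2, Real.sqrt_sq hP.le, Real.sqrt_sq hQ.le]
  have hs : Tendsto (fun n : ℝ => √(2 * P * Q * n)) atTop atTop :=
    Real.tendsto_sqrt_atTop.comp (tendsto_id.const_mul_atTop (by positivity))
  have hpi := Real.pi_pos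
  have hL := (lim_integral.comp hs).const_mul (√(2 * Real.pi) / Real.pi)
  have e3 : √(2 * Real.pi) / Real.pi * (√(2 * Real.pi) / 2) = 1 := by
    have : √(2 * Real.pi) * √(2 * Real.pi) = 2 * Real.pi := Real.mul_self_sqrt (by positivity)
    field_simp
    linarith
  rw [e3] at hL
  refine hL.congr' ?_
  filter_upwards [eventually_gt_atTop 0] with n hn
  simp only [Function.comp]
  rw [Real.sq_sqrt (by positivity)]
  have hsum := (bessel_hasSum (n * P * Q)).mul_left
    (Real.exp (-(n * P ^ 2)) * Real.exp (-(n * Q ^ 2)) * (Q / P))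
  have hfun : (fun a : ℕ => poissonPMF (n * P ^ 2) a * poissonPMF (n * Q ^ 2) (a + 1))
      = fun a : ℕ => Real.exp (-(n * P ^ 2)) * Real.exp (-(n * Q ^ 2)) * (Q / P) *
        ((n * P * Q) ^ (2 * a + 1) / ((Nat.factorial a : ℝ) * Nat.factorial (a + 1))) := by
    funext a
    unfold poissonPMF
    have : (Nat.factorial a : ℝ) ≠ 0 := by exact_mod_cast Nat.factorial_ne_zero _
    have : (Nat.factorial (a + 1) : ℝ) ≠ 0 := by exact_mod_cast Nat.factorial_ne_zero _
    have e : (n * P ^ 2) ^ a * (n * Q ^ 2) ^ (a + 1) = Q / P * (n * P * Q) ^ (2 * a + 1) := by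
      rw [pow_succ _ a, pow_succ _ (2 * a), pow_mul, div_mul_eq_mul_div, eq_div_iff hP.ne']
      have : (n * P * Q) ^ 2 = (n * P ^ 2) * (n * Q ^ 2) := by ring
      rw [this, mul_pow (n * P ^ 2)]
      ring
    rw [div_mul_div_comm]
    rw [show (n * P ^ 2) ^ a * Real.exp (-(n * P ^ 2)) *
      ((n * Q ^ 2) ^ (a + 1) * Real.exp (-(n * Q ^ 2))) =
      ((n * P ^ 2) ^ a * (n * Q ^ 2) ^ (a + 1)) * (Real.exp (-(n * P ^ 2)) *
        Real.exp (-(n * Q ^ 2))) by ring, e]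
    ring
  rw [hfun, hsum.tsum_eq, shift_int, show 2 * (n * P * Q) = 2 * P * Q * n by ring]
  set J := ∫ t in (-(Real.pi / 2))..(Real.pi / 2),
    Real.sinh (2 * P * Q * n * Real.cos t) * Real.cos t
  have hexp : Real.exp (-(n * P ^ 2)) * Real.exp (-(n * Q ^ 2))
      = Real.exp (-(2 * P * Q * n)) * Real.exp (-(n * (P - Q) ^ 2)) := by
    rw [← Real.exp_add, ← Real.exp_add]; congr 1; ring
  have hsq : √(2 * Real.pi) * √(2 * P * Q * n) = 2 * √(P * Q) * √(Real.pi * n) := by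
    rw [← Real.sqrt_mul (by positivity), mul_assoc 2 √(P * Q), ← Real.sqrt_mul (by positivity),
      show 2 * Real.pi * (2 * P * Q * n) = 2 ^ 2 * (P * Q * (Real.pi * n)) by ring,
      Real.sqrt_mul (by positivity), Real.sqrt_sq (by norm_num)]
  rw [hexp, div_div_eq_mul_div, ← hsq]
  have := Real.exp_pos (-(n * (P - Q) ^ 2))
  field_simp
end

section
/- Fix p > 0 and q > 0. For n > 0 let A_n and B_n be independent ℕ-valued random variables, Poisson-distributed with means np and nq respectively, and define the outcome pivot OP(n) = (1/2)·Pr(A_n = B_n) + (1/2)·Pr(A_n = B_n − 1). Then as n → ∞, OP(n) ∼ (1 / (2 (pq)^{1/4} √(πn))) · ((√p + √q)/(2√p)) · e^{−n(√p − √q)²}; that is, the ratio of OP(n) to this expression tends to 1. (Proposition 5, pro_OP.) -/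
/-- The outcome pivot `OP(n) = (1/2)·Pr(A_n = B_n) + (1/2)·Pr(A_n = B_n - 1)` for
independent Poisson vote totals `A_n`, `B_n` with means `np`, `nq`. -/
noncomputable def outcomePivot (p q n : ℝ) : ℝ :=
  (1 / 2) * (∑' a : ℕ, poissonPMF (n * p) a * poissonPMF (n * q) a)
    + (1 / 2) * (∑' a : ℕ, poissonPMF (n * p) a * poissonPMF (n * q) (a + 1))

open Real MeasureTheory Filter Topology

/-- Termwise integration of a series in powers of `sin`. -/
lemma op_swap (c : ℕ → ℝ) (e : ℕ → ℕ) (hc : Summable fun a => |c a|) (f : ℝ → ℝ)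
    (hf : ∀ t, HasSum (fun a => c a * sin t ^ e a) (f t)) :
    HasSum (fun a => c a * ∫ t in (0:ℝ)..π, sin t ^ e a) (∫ t in (0:ℝ)..π, f t) := by
  have h := intervalIntegral.hasSum_integral_of_dominated_convergence (μ := volume)
    (a := 0) (b := π) (F := fun a t => c a * sin t ^ e a) (f := f) (fun a _ => |c a|)
    (fun a => by fun_prop)
    (fun a => Eventually.of_forall fun t _ => by
      rw [Real.norm_eq_abs, abs_mul, abs_pow]
      exact mul_le_of_le_one_right (abs_nonneg _)
        (pow_le_one₀ (abs_nonneg _) (abs_sin_le_one t)))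
    (Eventually.of_forall fun t _ => hc)
    (by simp)
    (Eventually.of_forall fun t _ => hf t)
  simpa using h

lemma op_wallis (a : ℕ) : (∫ t in (0:ℝ)..π, sin t ^ (2 * a)) =
    π * ((2 * a).factorial : ℝ) / (4 ^ a * (a.factorial : ℝ) ^ 2) := by
  rw [integral_sin_pow_even]
  have h : ∀ a : ℕ, ∏ i ∈ Finset.range a, (2 * (i : ℝ) + 1) / (2 * i + 2) =
      ((2 * a).factorial : ℝ) / (4 ^ a * (a.factorial : ℝ) ^ 2) := by
    intro a
    induction a with
    | zero => simp
    | succ k ih =>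
      rw [Finset.prod_range_succ, ih]
      have h1 : (k.factorial : ℝ) ≠ 0 := by positivity
      rw [show 2 * (k + 1) = 2 * k + 1 + 1 by ring, Nat.factorial_succ, Nat.factorial_succ,
        Nat.factorial_succ]
      push_cast
      field_simp
      ring
  rw [h, mul_div_assoc]

lemma op_hasSum0 (m : ℝ) : HasSum (fun a : ℕ => m ^ (2 * a) / (a.factorial : ℝ) ^ 2)
    ((1 / π) * ∫ t in (0:ℝ)..π, cosh (2 * m * sin t)) := by
  have h := op_swap (fun a => (2 * m) ^ (2 * a) / ((2 * a).factorial : ℝ)) (fun a => 2 * a)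
    (hasSum_cosh (2 * m)).summable.abs (fun t => cosh (2 * m * sin t))
    (fun t => by
      refine (hasSum_cosh (2 * m * sin t)).congr_fun ?_
      intro a
      rw [mul_pow]; ring)
  refine (h.mul_left (1 / π)).congr_fun ?_
  intro a
  rw [op_wallis, mul_pow, pow_mul 2]
  have := pi_pos.ne'
  have h1 : ((2 * a).factorial : ℝ) ≠ 0 := by positivity
  norm_num
  field_simp

lemma op_hasSum1 (m : ℝ) :
    HasSum (fun a : ℕ => m ^ (2 * a + 1) / ((a.factorial : ℝ) * ((a + 1).factorial : ℝ)))
    ((1 / π) * ∫ t in (0:ℝ)..π, sin t * sinh (2 * m * sin t)) := by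
  have h := op_swap (fun a => (2 * m) ^ (2 * a + 1) / ((2 * a + 1).factorial : ℝ))
    (fun a => 2 * (a + 1))
    (hasSum_sinh (2 * m)).summable.abs (fun t => sin t * sinh (2 * m * sin t))
    (fun t => by
      refine ((hasSum_sinh (2 * m * sin t)).mul_left (sin t)).congr_fun ?_
      intro a
      rw [mul_pow]; ring)
  refine (h.mul_left (1 / π)).congr_fun ?_
  intro a
  rw [op_wallis, mul_pow, show 2 * (a + 1) = 2 * a + 1 + 1 by ring, Nat.factorial_succ (2 * a + 1),
    Nat.factorial_succ a, pow_succ 2, pow_mul 2]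
  have := pi_pos.ne'
  have h1 : ((2 * a + 1).factorial : ℝ) ≠ 0 := by positivity
  have h2 : (a.factorial : ℝ) ≠ 0 := by positivity
  push_cast
  norm_num
  field_simp
  ring

lemma op_cos_lim (s : ℝ) :
    Tendsto (fun x : ℝ => x * (cos (s / √x) - 1)) atTop (𝓝 (-(1/2) * s ^ 2)) := by
  have h0 : Tendsto (fun x : ℝ => s / √x / 2) atTop (𝓝 0) := by
    have := (tendsto_sqrt_atTop.const_div_atTop s).div_const 2
    simpa using this
  have h1 : Tendsto (fun x : ℝ => sinc (s / √x / 2)) atTop (𝓝 1) := by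
    have := (continuous_sinc.tendsto 0).comp h0
    simpa [Function.comp_def] using this
  have h2 : Tendsto (fun x : ℝ => -(1/2) * s ^ 2 * sinc (s / √x / 2) ^ 2) atTop
      (𝓝 (-(1/2) * s ^ 2)) := by
    have := (h1.pow 2).const_mul (-(1/2) * s ^ 2)
    simpa using this
  refine h2.congr' ?_
  filter_upwards [eventually_gt_atTop 0] with x hx
  by_cases hs : s = 0
  · simp [hs]
  have hx' : √x ≠ 0 := (sqrt_pos.2 hx).ne'
  have hne : s / √x / 2 ≠ 0 := by positivity
  rw [sinc_of_ne_zero hne]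
  have hc : cos (s / √x) = 1 - 2 * sin (s / √x / 2) ^ 2 := by
    have := cos_two_mul (s / √x / 2)
    have h3 := sin_sq_add_cos_sq (s / √x / 2)
    rw [show 2 * (s / √x / 2) = s / √x by ring] at this
    linarith
  rw [hc]
  have hxx : √x ^ 2 = x := sq_sqrt hx.le
  generalize sin (s / √x / 2) = S
  nth_rw 2 [← hxx]
  field_simp
  ring

lemma op_laplace (k : ℕ) :
    Tendsto (fun x : ℝ => √x * ∫ t in (0:ℝ)..π, sin t ^ k * exp (x * (sin t - 1))) atTop
      (𝓝 √(2 * π)) := by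
  set F : ℝ → ℝ → ℝ := fun x => Set.indicator (Set.Ioc (-(π / 2) * √x) (π / 2 * √x))
    (fun s => cos (s / √x) ^ k * exp (x * (cos (s / √x) - 1))) with hF
  have hb : 0 < 2 / π ^ 2 := by positivity
  have key : Tendsto (fun x => ∫ s, F x s) atTop (𝓝 (∫ s : ℝ, exp (-(1/2) * s ^ 2))) := by
    refine tendsto_integral_filter_of_dominated_convergence
      (fun s => exp (-(2 / π ^ 2) * s ^ 2)) ?_ ?_ (integrable_exp_neg_mul_sq hb) ?_
    · refine Eventually.of_forall fun x => ?_
      refine AEStronglyMeasurable.indicator ?_ measurableSet_Ioc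
      exact Continuous.aestronglyMeasurable (by fun_prop)
    · filter_upwards [eventually_gt_atTop 0] with x hx
      refine Eventually.of_forall fun s => ?_
      by_cases hs : s ∈ Set.Ioc (-(π / 2) * √x) (π / 2 * √x)
      · simp only [hF, Set.indicator_of_mem hs]
        have hx' : 0 < √x := sqrt_pos.2 hx
        have h1 : |s / √x| ≤ π := by
          rw [abs_le, le_div_iff₀ hx', div_le_iff₀ hx']
          have := mul_pos pi_pos hx'
          constructor <;> nlinarith [hs.1, hs.2]
        have h2 := cos_le_one_sub_mul_cos_sq h1
        rw [Real.norm_eq_abs, abs_mul, abs_pow, abs_exp]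
        refine (mul_le_of_le_one_left (exp_pos _).le
          (pow_le_one₀ (abs_nonneg _) (abs_cos_le_one _))).trans ?_
        apply exp_le_exp.2
        rw [div_pow, sq_sqrt hx.le] at h2
        calc x * (cos (s / √x) - 1) ≤ x * (-(2 / π ^ 2 * (s ^ 2 / x))) := by
              gcongr; linarith
          _ = _ := by field_simp
      · simp only [hF, Set.indicator_of_notMem hs, norm_zero]
        positivity
    · refine Eventually.of_forall fun s => ?_
      have hev : ∀ᶠ x : ℝ in atTop, s ∈ Set.Ioc (-(π / 2) * √x) (π / 2 * √x) := by
        filter_upwards [tendsto_sqrt_atTop.eventually_gt_atTop (|s| / (π / 2))] with x hx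
        rw [div_lt_iff₀ (by positivity)] at hx
        have := abs_lt.1 (show |s| < π / 2 * √x by linarith)
        exact ⟨by linarith, this.2.le⟩
      have hcos : Tendsto (fun x : ℝ => cos (s / √x) ^ k) atTop (𝓝 1) := by
        have := ((continuous_cos.tendsto 0).comp (tendsto_sqrt_atTop.const_div_atTop s)).pow k
        simpa using this
      have h3 := hcos.mul ((continuous_exp.tendsto _).comp (op_cos_lim s))
      rw [one_mul] at h3
      refine h3.congr' ?_
      filter_upwards [hev] with x hx
      simp only [hF, Set.indicator_of_mem hx, Function.comp]
  rw [integral_gaussian, show π / (1 / 2) = 2 * π by ring] at key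
  refine key.congr' ?_
  filter_upwards [eventually_gt_atTop 0] with x hx
  have hx' : 0 < √x := sqrt_pos.2 hx
  have h4 := intervalIntegral.integral_comp_div_add (a := -(π / 2) * √x) (b := π / 2 * √x)
    (fun t => sin t ^ k * exp (x * (sin t - 1))) hx'.ne' (π / 2)
  rw [mul_div_cancel_right₀ _ hx'.ne', mul_div_cancel_right₀ _ hx'.ne', neg_add_cancel,
    add_halves, smul_eq_mul] at h4
  rw [← h4, intervalIntegral.integral_of_le (by nlinarith [mul_pos pi_pos hx']),
    ← integral_indicator measurableSet_Ioc]
  simp only [sin_add_pi_div_two, hF]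

/-- The remainder is negligible. -/
lemma op_rem (k : ℕ) :
    Tendsto (fun x : ℝ => √x * exp (-x) * ∫ t in (0:ℝ)..π, sin t ^ k * exp (-(x * sin t))) atTop
      (𝓝 0) := by
  have h0 : Tendsto (fun x : ℝ => √x * exp (-x) * π) atTop (𝓝 0) := by
    have := (tendsto_rpow_mul_exp_neg_mul_atTop_nhds_zero (1/2) 1 one_pos).mul_const π
    simpa [sqrt_eq_rpow] using this
  refine squeeze_zero_norm' ?_ h0
  filter_upwards [eventually_gt_atTop 0] with x hx
  rw [norm_mul, Real.norm_of_nonneg (by positivity : 0 ≤ √x * exp (-x))]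
  gcongr
  have := intervalIntegral.norm_integral_le_of_norm_le_const (a := 0) (b := π) (C := 1)
    (f := fun t => sin t ^ k * exp (-(x * sin t))) (fun t ht => by
      rw [Set.uIoc_of_le pi_pos.le] at ht
      have hs : 0 ≤ sin t := sin_nonneg_of_mem_Icc ⟨ht.1.le, ht.2⟩
      rw [Real.norm_of_nonneg (by positivity)]
      exact mul_le_one₀ (pow_le_one₀ hs (sin_le_one t)) (exp_pos _).le
        (exp_le_one_iff.2 (by have := mul_nonneg hx.le hs; linarith)))
  simpa [abs_of_pos pi_pos] using this

lemma op_int_split (k : ℕ) (σ x : ℝ) :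
    √x * exp (-x) * ∫ t in (0:ℝ)..π, sin t ^ k * ((exp (x * sin t) + σ * exp (-(x * sin t))) / 2) =
    (1/2) * (√x * ∫ t in (0:ℝ)..π, sin t ^ k * exp (x * (sin t - 1))) + (σ / 2) *
      (√x * exp (-x) * ∫ t in (0:ℝ)..π, sin t ^ k * exp (-(x * sin t))) := by
  have h1 : (∫ t in (0:ℝ)..π, sin t ^ k * ((exp (x * sin t) + σ * exp (-(x * sin t))) / 2)) =
      (exp x / 2) * (∫ t in (0:ℝ)..π, sin t ^ k * exp (x * (sin t - 1))) +
      (σ / 2) * ∫ t in (0:ℝ)..π, sin t ^ k * exp (-(x * sin t)) := by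
    rw [← intervalIntegral.integral_const_mul, ← intervalIntegral.integral_const_mul,
      ← intervalIntegral.integral_add]
    · congr 1
      ext t
      rw [show x * sin t = x + x * (sin t - 1) by ring, exp_add]
      ring
    · exact Continuous.intervalIntegrable (by fun_prop) _ _
    · exact Continuous.intervalIntegrable (by fun_prop) _ _
  rw [h1]
  have : exp (-x) * exp x = 1 := by rw [← exp_add]; simp
  linear_combination (1/2 * √x * (∫ t in (0:ℝ)..π, sin t ^ k * exp (x * (sin t - 1)))) * this

lemma op_int_lim (k : ℕ) (σ : ℝ) :
    Tendsto (fun x : ℝ => √x * exp (-x) *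
      ∫ t in (0:ℝ)..π, sin t ^ k * ((exp (x * sin t) + σ * exp (-(x * sin t))) / 2)) atTop
      (𝓝 ((1/2) * √(2 * π))) := by
  simp only [op_int_split]
  have h := ((op_laplace k).const_mul (1/2)).add ((op_rem k).const_mul (σ / 2))
  rwa [mul_zero, add_zero] at h

lemma op_tsum0 : Tendsto (fun x : ℝ => √(2 * x) * exp (-(2 * x)) *
    ∑' a : ℕ, x ^ (2 * a) / (a.factorial : ℝ) ^ 2) atTop (𝓝 ((1 / π) * ((1/2) * √(2 * π)))) := by
  have h := ((op_int_lim 0 1).comp (tendsto_id.const_mul_atTop (zero_lt_two (α := ℝ)))).const_mul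
    (1 / π)
  refine h.congr fun x => ?_
  rw [(op_hasSum0 x).tsum_eq]
  simp only [Function.comp, id, pow_zero, one_mul, cosh_eq]
  ring

lemma op_tsum1 : Tendsto (fun x : ℝ => √(2 * x) * exp (-(2 * x)) *
    ∑' a : ℕ, x ^ (2 * a + 1) / ((a.factorial : ℝ) * ((a + 1).factorial : ℝ))) atTop
    (𝓝 ((1 / π) * ((1/2) * √(2 * π)))) := by
  have h := ((op_int_lim 1 (-1)).comp
    (tendsto_id.const_mul_atTop (zero_lt_two (α := ℝ)))).const_mul (1 / π)
  refine h.congr fun x => ?_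
  rw [(op_hasSum1 x).tsum_eq]
  simp only [Function.comp, id, pow_one, sinh_eq, neg_one_mul, ← sub_eq_add_neg]
  ring

lemma op_formula (u v n : ℝ) (hu : 0 < u) :
    outcomePivot (u ^ 2) (v ^ 2) n = (1/2) * exp (-(n * (u ^ 2 + v ^ 2))) *
      ((∑' a : ℕ, (n * (u * v)) ^ (2 * a) / (a.factorial : ℝ) ^ 2) + v / u *
      ∑' a : ℕ, (n * (u * v)) ^ (2 * a + 1) / ((a.factorial : ℝ) * ((a + 1).factorial : ℝ))) := by
  have e : exp (-(n * (u ^ 2 + v ^ 2))) = exp (-(n * u ^ 2)) * exp (-(n * v ^ 2)) := by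
    rw [← exp_add]; ring_nf
  have h0 : (∑' a : ℕ, poissonPMF (n * u ^ 2) a * poissonPMF (n * v ^ 2) a) =
      exp (-(n * (u ^ 2 + v ^ 2))) *
        ∑' a : ℕ, (n * (u * v)) ^ (2 * a) / (a.factorial : ℝ) ^ 2 := by
    rw [← tsum_mul_left]
    refine tsum_congr fun a => ?_
    unfold poissonPMF
    rw [e, pow_mul, show (n * (u * v)) ^ 2 = (n * u ^ 2) * (n * v ^ 2) by ring, mul_pow]
    field_simp
    simp only [mul_pow, ← pow_mul]
    ring
  have h1 : (∑' a : ℕ, poissonPMF (n * u ^ 2) a * poissonPMF (n * v ^ 2) (a + 1)) =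
      (exp (-(n * (u ^ 2 + v ^ 2))) * (v / u)) *
        ∑' a : ℕ, (n * (u * v)) ^ (2 * a + 1) /
          ((a.factorial : ℝ) * ((a + 1).factorial : ℝ)) := by
    rw [← tsum_mul_left]
    refine tsum_congr fun a => ?_
    unfold poissonPMF
    rw [e, pow_succ (n * (u * v)), pow_mul,
      show (n * (u * v)) ^ 2 = (n * u ^ 2) * (n * v ^ 2) by ring, mul_pow,
      pow_succ (n * v ^ 2)]
    field_simp
    simp only [mul_pow, ← pow_mul]
    ring
  rw [outcomePivot, h0, h1]
  ring

/-- **Proposition 5 (pro_OP).** Fix `p, q > 0`. As `n → ∞`,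
`OP(n) ∼ (1/(2 (pq)^{1/4} √(πn))) · ((√p+√q)/(2√p)) · e^{-n(√p-√q)²}`; that is, the ratio
of `OP(n)` to this expression tends to `1`. -/
theorem outcome_pivot_asymptotic (p q : ℝ) (hp : 0 < p) (hq : 0 < q) :
    Filter.Tendsto
      (fun n : ℝ =>
        outcomePivot p q n
          / ((1 / (2 * (p * q) ^ ((1 : ℝ) / 4) * Real.sqrt (Real.pi * n)))
              * ((Real.sqrt p + Real.sqrt q) / (2 * Real.sqrt p))
              * Real.exp (-(n * (Real.sqrt p - Real.sqrt q) ^ 2))))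
      Filter.atTop (nhds 1) := by
  obtain ⟨u, hu, rfl⟩ : ∃ u : ℝ, 0 < u ∧ u ^ 2 = p := ⟨√p, sqrt_pos.2 hp, sq_sqrt hp.le⟩
  obtain ⟨v, hv, rfl⟩ : ∃ v : ℝ, 0 < v ∧ v ^ 2 = q := ⟨√q, sqrt_pos.2 hq, sq_sqrt hq.le⟩
  rw [sqrt_sq hu.le, sqrt_sq hv.le]
  have huv : 0 < u * v := mul_pos hu hv
  have hr : (u ^ 2 * v ^ 2) ^ ((1 : ℝ) / 4) = √(u * v) := by
    rw [← mul_pow, sqrt_eq_rpow, ← rpow_natCast, ← rpow_mul huv.le]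
    norm_num
  have hm : Tendsto (fun n : ℝ => n * (u * v)) atTop atTop := tendsto_id.atTop_mul_const huv
  have h := (((op_tsum0.comp hm).add ((op_tsum1.comp hm).const_mul (v / u))).const_mul
    (√2 * √π * (u / (u + v))))
  have hlim : √2 * √π * (u / (u + v)) * (1 / π * (1 / 2 * √(2 * π)) +
      v / u * (1 / π * (1 / 2 * √(2 * π)))) = 1 := by
    rw [sqrt_mul zero_le_two]
    have h2 : √2 ^ 2 = (2:ℝ) := sq_sqrt zero_le_two
    have h3 : √π ^ 2 = π := sq_sqrt pi_pos.le
    have := pi_pos.ne'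
    field_simp
    rw [h2, h3]
    ring
  rw [hlim] at h
  refine h.congr' ?_
  filter_upwards [eventually_gt_atTop 0] with n hn
  rw [op_formula u v n hu, hr, sqrt_mul pi_pos.le]
  simp only [Function.comp]
  have e : exp (-(n * (u ^ 2 + v ^ 2))) =
      exp (-(n * (u - v) ^ 2)) * exp (-(2 * (n * (u * v)))) := by
    rw [← exp_add]; ring_nf
  rw [e, sqrt_mul zero_le_two, sqrt_mul hn.le]
  have h2 : √2 ^ 2 = (2:ℝ) := sq_sqrt zero_le_two
  have hsn : 0 < √n := sqrt_pos.2 hn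
  have hsuv : 0 < √(u * v) := sqrt_pos.2 huv
  have hsp : 0 < √π := sqrt_pos.2 pi_pos
  have he := exp_pos (-(n * (u - v) ^ 2))
  generalize (∑' a : ℕ, (n * (u * v)) ^ (2 * a) / (a.factorial : ℝ) ^ 2) = S0
  generalize (∑' a : ℕ, (n * (u * v)) ^ (2 * a + 1) /
    ((a.factorial : ℝ) * ((a + 1).factorial : ℝ))) = S1
  generalize exp (-(n * (u - v) ^ 2)) = E at *
  generalize exp (-(2 * (n * (u * v)))) = E2
  generalize √(u * v) = R at *
  field_simp
  rw [h2]
  ring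
end

section
/- For every c > 0 there exists a unique x > 0 satisfying x = c · φ(x)/Φ(x), and this solution satisfies x < c·√(2/π). (Existence, uniqueness and bound for the first-order condition h'ₙ(α₀) = 0 in Proposition 6 (pro_PP) and Corollary 7 (cor_PP), where c = (K−2)/2 and x = √n(α₀−p)/√p.) -/
/-- The standard normal density `φ(x) = (1/√(2π)) e^{-x²/2}`. -/
noncomputable def stdNormalPDF (x : ℝ) : ℝ := (1 / Real.sqrt (2 * Real.pi)) * Real.exp (-x ^ 2 / 2)

/-- The standard normal cumulative distribution function `Φ(x) = ∫_{-∞}^x φ(t) dt`. -/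
noncomputable def stdNormalCDF (x : ℝ) : ℝ := ∫ t in Set.Iic x, stdNormalPDF t

lemma pdf_pos (x : ℝ) : 0 < stdNormalPDF x := by
  unfold stdNormalPDF; positivity

lemma pdf_cont : Continuous stdNormalPDF := by
  unfold stdNormalPDF; fun_prop

lemma pdf_eq : stdNormalPDF =
    fun x => (1 / Real.sqrt (2 * Real.pi)) * Real.exp (-(1 / 2 : ℝ) * x ^ 2) := by
  funext x; unfold stdNormalPDF; congr 2; ring

lemma pdf_integrable : MeasureTheory.Integrable stdNormalPDF := by
  rw [pdf_eq]
  exact (integrable_exp_neg_mul_sq (by norm_num)).const_mul _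

lemma cdf_sub (a b : ℝ) : stdNormalCDF b = stdNormalCDF a + ∫ t in a..b, stdNormalPDF t := by
  unfold stdNormalCDF
  rw [← intervalIntegral.integral_Iic_sub_Iic pdf_integrable.integrableOn
    pdf_integrable.integrableOn]
  ring

lemma cdf_cont : Continuous stdNormalCDF := by
  have h : stdNormalCDF = fun x => stdNormalCDF 0 + ∫ t in (0 : ℝ)..x, stdNormalPDF t := by
    funext x; exact cdf_sub 0 x
  rw [h]
  exact continuous_const.add
    (intervalIntegral.continuous_primitive (fun a b => pdf_cont.intervalIntegrable a b) 0)

lemma cdf_strictMono : StrictMono stdNormalCDF := by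
  intro a b hab
  rw [cdf_sub a b]
  have := intervalIntegral.intervalIntegral_pos_of_pos
    (pdf_cont.intervalIntegrable a b) pdf_pos hab
  linarith

lemma cdf_zero : stdNormalCDF 0 = 1 / 2 := by
  unfold stdNormalCDF
  have h := integral_comp_neg_Iic 0 stdNormalPDF
  have h2 : ∀ x, stdNormalPDF (-x) = stdNormalPDF x := by
    intro x; simp [stdNormalPDF]
  simp only [h2, neg_zero] at h
  rw [h, pdf_eq, MeasureTheory.integral_const_mul, integral_gaussian_Ioi]
  have h3 : Real.pi / (1 / 2) = 2 * Real.pi := by ring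
  rw [h3]
  have : 0 < Real.sqrt (2 * Real.pi) := by positivity
  field_simp

lemma pdf_anti {x y : ℝ} (hx : 0 ≤ x) (hxy : x ≤ y) : stdNormalPDF y ≤ stdNormalPDF x := by
  unfold stdNormalPDF
  have : x ^ 2 ≤ y ^ 2 := pow_le_pow_left₀ hx hxy 2
  gcongr

lemma pdf_zero : 2 * stdNormalPDF 0 = Real.sqrt (2 / Real.pi) := by
  symm
  rw [Real.sqrt_eq_iff_mul_self_eq (by positivity) (by have := pdf_pos 0; positivity)]
  have h : Real.sqrt (2 * Real.pi) * Real.sqrt (2 * Real.pi) = 2 * Real.pi :=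
    Real.mul_self_sqrt (by positivity)
  have h0 : 0 < Real.sqrt (2 * Real.pi) := by positivity
  have hp := Real.pi_pos
  have e : stdNormalPDF 0 = 1 / Real.sqrt (2 * Real.pi) := by simp [stdNormalPDF]
  have e2 : 2 * stdNormalPDF 0 * (2 * stdNormalPDF 0)
      = 4 / (Real.sqrt (2 * Real.pi) * Real.sqrt (2 * Real.pi)) := by
    rw [e]; field_simp; norm_num
  rw [e2, h]; field_simp; norm_num

lemma cdf_gt {x : ℝ} (hx : 0 < x) : 1 / 2 < stdNormalCDF x := by
  rw [← cdf_zero]; exact cdf_strictMono hx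

/-- **First-order condition in Proposition 6 / Corollary 7.** For every `c > 0` there is a
unique `x > 0` with `x = c·φ(x)/Φ(x)`, and this solution satisfies `x < c·√(2/π)`. -/
theorem foc_exists_unique (c : ℝ) (hc : 0 < c) :
    (∃! x : ℝ, 0 < x ∧ x = c * (stdNormalPDF x / stdNormalCDF x))
    ∧ ∀ x : ℝ, 0 < x → x = c * (stdNormalPDF x / stdNormalCDF x) →
        x < c * Real.sqrt (2 / Real.pi) := by
  have key : ∀ x : ℝ, 0 < x → (x = c * (stdNormalPDF x / stdNormalCDF x) ↔
      x * stdNormalCDF x - c * stdNormalPDF x = 0) := by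
    intro x hx
    have h : 0 < stdNormalCDF x := by linarith [cdf_gt hx]
    rw [← mul_div_assoc, eq_div_iff h.ne', sub_eq_zero]
  have mono : ∀ x y : ℝ, 0 ≤ x → x < y →
      x * stdNormalCDF x - c * stdNormalPDF x < y * stdNormalCDF y - c * stdNormalPDF y := by
    intro x y hx hxy
    have h1 := mul_le_mul_of_nonneg_left (pdf_anti hx hxy.le) hc.le
    have h2 := mul_le_mul_of_nonneg_left (cdf_strictMono hxy).le hx
    have h3 := mul_lt_mul_of_pos_right hxy
      (show 0 < stdNormalCDF y by linarith [cdf_gt (hx.trans_lt hxy)])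
    linarith
  have hb : 0 < c * Real.sqrt (2 / Real.pi) := by
    have := Real.pi_pos
    positivity
  have hFb : 0 < (c * Real.sqrt (2 / Real.pi)) * stdNormalCDF (c * Real.sqrt (2 / Real.pi))
      - c * stdNormalPDF (c * Real.sqrt (2 / Real.pi)) := by
    have h1 := mul_lt_mul_of_pos_left (cdf_gt hb) hb
    have h2 := mul_le_mul_of_nonneg_left (pdf_anti le_rfl hb.le) hc.le
    have h3 : c * Real.sqrt (2 / Real.pi) * (1 / 2) = c * stdNormalPDF 0 := by
      rw [← pdf_zero]; ring
    linarith
  have hF0 : (0 : ℝ) * stdNormalCDF 0 - c * stdNormalPDF 0 < 0 := by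
    have := mul_pos hc (pdf_pos 0)
    linarith
  have hcont : Continuous fun x : ℝ => x * stdNormalCDF x - c * stdNormalPDF x :=
    (continuous_id.mul cdf_cont).sub (continuous_const.mul pdf_cont)
  refine ⟨?_, ?_⟩
  · obtain ⟨x, hx, hx0⟩ := intermediate_value_Ioo hb.le hcont.continuousOn ⟨hF0, hFb⟩
    refine ⟨x, ⟨hx.1, (key x hx.1).2 hx0⟩, ?_⟩
    rintro y ⟨hy, hy0⟩
    have hy1 := (key y hy).1 hy0
    simp only at hx0
    rcases lt_trichotomy y x with h | h | h
    · have := mono y x hy.le h; linarith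
    · exact h
    · have := mono x y hx.1.le h; linarith
  · intro x hx hx0
    have hx1 := (key x hx).1 hx0
    by_contra hcon
    rcases (not_lt.1 hcon).eq_or_lt with h | h
    · rw [← h] at hx1; linarith
    · have := mono _ x hb.le h; linarith
end
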